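/- Let n, q, p be integers with 2 ≤ q < p ≤ n. If G is a graph of order n with no clique of order p and G has as many cliques of order q as the Turán graph T_{p−1}(n), then G is isomorphic to T_{p−1}(n). -/

import Mathlib

open SimpleGraph

/-- The number of cliques of order `q` in a graph. -/
noncomputable def numCliques {V : Type*} (G : SimpleGraph V) (q : ℕ) : ℕ :=
  {s : Finset V | G.IsNClique q s}.ncard

open Finset in
open Classical in
/-- Number of `q`-cliques satisfying `P`. -/
noncomputable def cnt {V : Type*} [Fintype V] (G : SimpleGraph V) (q : ℕ)
    (P : Finset V → Prop) : ℕ :=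
  (univ.filter fun S => G.IsNClique q S ∧ P S).card

section cntlemmas
variable {V : Type*} [Fintype V]

lemma cnt_le_map {G H : SimpleGraph V} {q : ℕ} {P Q : Finset V → Prop} (e : V ≃ V)
    (h : ∀ S, G.IsNClique q S → P S →
      H.IsClique (S.map e.toEmbedding : Finset V) ∧ Q (S.map e.toEmbedding)) :
    cnt G q P ≤ cnt H q Q := by
  classical
  unfold cnt
  apply Finset.card_le_card_of_injOn (fun S => S.map e.toEmbedding)
  · intro S hS
    simp only [Finset.coe_filter, Finset.mem_univ, true_and, Set.mem_ofPred_eq] at hS ⊢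
    obtain ⟨h1, h2⟩ := h S hS.1 hS.2
    exact ⟨⟨h1, by rw [Finset.card_map]; exact hS.1.2⟩, h2⟩
  · intro S _ T _ hST
    exact Finset.map_injective _ hST

lemma cnt_split (G : SimpleGraph V) (q : ℕ) (P R : Finset V → Prop) :
    cnt G q P = cnt G q (fun S => P S ∧ R S) + cnt G q (fun S => P S ∧ ¬ R S) := by
  classical
  unfold cnt
  rw [← Finset.card_filter_add_card_filter_not (p := R), Finset.filter_filter,
    Finset.filter_filter]
  congr 2 <;> ext S <;> simp [and_assoc]

lemma cnt_congr {G H : SimpleGraph V} {q : ℕ} {P Q : Finset V → Prop}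
    (h : ∀ S, (G.IsNClique q S ∧ P S) ↔ (H.IsNClique q S ∧ Q S)) : cnt G q P = cnt H q Q := by
  classical
  unfold cnt
  simp only [h]

lemma cnt_mono {G H : SimpleGraph V} {q : ℕ} {P Q : Finset V → Prop}
    (h : ∀ S, (G.IsNClique q S ∧ P S) → (H.IsNClique q S ∧ Q S)) : cnt G q P ≤ cnt H q Q := by
  classical
  unfold cnt
  apply Finset.card_le_card
  intro S hS
  simp only [Finset.mem_filter, Finset.mem_univ, true_and] at hS ⊢
  exact h S hS

lemma cnt_pos {G : SimpleGraph V} {q : ℕ} {P : Finset V → Prop} :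
    0 < cnt G q P ↔ ∃ S, G.IsNClique q S ∧ P S := by
  classical
  unfold cnt
  rw [Finset.card_pos]
  simp [Finset.Nonempty]

lemma cnt_eq_zero {G : SimpleGraph V} {q : ℕ} {P : Finset V → Prop}
    (h : ∀ S, G.IsNClique q S → ¬ P S) : cnt G q P = 0 := by
  by_contra h0
  obtain ⟨S, h1, h2⟩ := cnt_pos.1 (Nat.pos_of_ne_zero h0)
  exact h S h1 h2

lemma isClique_replace [DecidableEq V] (G : SimpleGraph V) {s t : V} {S : Finset V} (ht : t ∉ S) :
    (G.replaceVertex s t).IsClique S ↔ G.IsClique S := by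
  simp only [isClique_iff, Set.Pairwise, replaceVertex, Finset.mem_coe]
  constructor
  · intro h a ha b hb hab
    have := h ha hb hab
    have h1 : a ≠ t := fun h => ht (h ▸ ha)
    have h2 : b ≠ t := fun h => ht (h ▸ hb)
    simpa [h1, h2] using this
  · intro h a ha b hb hab
    have := h ha hb hab
    have h1 : a ≠ t := fun h => ht (h ▸ ha)
    have h2 : b ≠ t := fun h => ht (h ▸ hb)
    simpa [h1, h2] using this

lemma cnt_replace_notMem [DecidableEq V] (G : SimpleGraph V) (q : ℕ) (s t : V)
    (P : Finset V → Prop) :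
    cnt (G.replaceVertex s t) q (fun S => P S ∧ t ∉ S) = cnt G q (fun S => P S ∧ t ∉ S) := by
  apply cnt_congr
  intro S
  simp only [isNClique_iff]
  constructor
  · rintro ⟨⟨h1, h2⟩, h3, h4⟩
    exact ⟨⟨(isClique_replace G h4).1 h1, h2⟩, h3, h4⟩
  · rintro ⟨⟨h1, h2⟩, h3, h4⟩
    exact ⟨⟨(isClique_replace G h4).2 h1, h2⟩, h3, h4⟩

lemma cnt_replace_mem [DecidableEq V] (G : SimpleGraph V) (q : ℕ) {s t : V} (hst : s ≠ t) :
    cnt (G.replaceVertex s t) q (fun S => t ∈ S) = cnt G q (fun S => s ∈ S ∧ t ∉ S) := by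
  apply le_antisymm
  · apply cnt_le_map (Equiv.swap s t)
    intro S hS ht
    have hs : s ∉ S := fun hs =>
      G.not_adj_replaceVertex_same s t (hS.1 hs ht hst)
    refine ⟨?_, ?_, ?_⟩
    · intro a ha b hb hab
      simp only [Finset.coe_map, Set.mem_image, Finset.mem_coe, Equiv.coe_toEmbedding] at ha hb
      obtain ⟨x, hx, rfl⟩ := ha
      obtain ⟨y, hy, rfl⟩ := hb
      have hxy : x ≠ y := fun h => hab (by rw [h])
      have := hS.1 hx hy hxy
      have hxs : x ≠ s := fun h => hs (h ▸ hx)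
      have hys : y ≠ s := fun h => hs (h ▸ hy)
      simp only [replaceVertex] at this
      simp only [Equiv.swap_apply_def, hxs, hys, if_false]
      split_ifs at this ⊢ <;> simp_all
    · simp only [Finset.mem_map, Equiv.coe_toEmbedding]
      exact ⟨t, ht, by simp⟩
    · simp only [Finset.mem_map, Equiv.coe_toEmbedding, not_exists, not_and]
      intro x hx h
      rw [Equiv.swap_apply_eq_iff, Equiv.swap_apply_right] at h
      exact hs (h ▸ hx)
  · apply cnt_le_map (Equiv.swap s t)
    rintro S hS ⟨hs, ht⟩
    refine ⟨?_, ?_⟩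
    · intro a ha b hb hab
      simp only [Finset.coe_map, Set.mem_image, Finset.mem_coe, Equiv.coe_toEmbedding] at ha hb
      obtain ⟨x, hx, rfl⟩ := ha
      obtain ⟨y, hy, rfl⟩ := hb
      have hxy : x ≠ y := fun h => hab (by rw [h])
      have := hS.1 hx hy hxy
      have hxt : x ≠ t := fun h => ht (h ▸ hx)
      have hyt : y ≠ t := fun h => ht (h ▸ hy)
      simp only [Equiv.swap_apply_def, hxt, hyt, if_false, replaceVertex]
      split_ifs <;> simp_all
    · simp only [Finset.mem_map, Equiv.coe_toEmbedding]
      exact ⟨s, hs, by simp⟩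

/-- The main counting identity for vertex replacement. -/
lemma cnt_replace [DecidableEq V] (G : SimpleGraph V) (q : ℕ) {s t : V} (hst : s ≠ t) :
    cnt (G.replaceVertex s t) q (fun _ => True) + cnt G q (fun S => t ∈ S)
      + cnt G q (fun S => s ∈ S ∧ t ∈ S)
      = cnt G q (fun _ => True) + cnt G q (fun S => s ∈ S) := by
  have h1 := cnt_split (G.replaceVertex s t) q (fun _ => True) (fun S => t ∈ S)
  have h2 := cnt_split G q (fun _ => True) (fun S => t ∈ S)
  have h3 := cnt_split G q (fun S => s ∈ S) (fun S => t ∈ S)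
  have h4 := cnt_replace_notMem G q s t (fun _ => True)
  have h5 := cnt_replace_mem G q hst
  simp only [true_and] at h1 h2 h4
  omega

/-- `k_q`-maximal among `K_{r+1}`-free graphs. -/
def KMax (G : SimpleGraph V) (q r : ℕ) : Prop :=
  G.CliqueFree (r + 1) ∧ ∀ H : SimpleGraph V, H.CliqueFree (r + 1) →
    cnt H q (fun _ => True) ≤ cnt G q (fun _ => True)

lemma KMax.le_of_replace {G : SimpleGraph V} {q r : ℕ} (h : KMax G q r) {s t : V} (hst : s ≠ t) :
    cnt G q (fun S => s ∈ S) ≤ cnt G q (fun S => t ∈ S) + cnt G q (fun S => s ∈ S ∧ t ∈ S) := by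
  classical
  have := h.2 _ (h.1.replaceVertex s t)
  have := cnt_replace G q hst
  omega

lemma cnt_nonadj {G : SimpleGraph V} {q : ℕ} {s t : V} (hst : s ≠ t) (hn : ¬ G.Adj s t) :
    cnt G q (fun S => s ∈ S ∧ t ∈ S) = 0 :=
  cnt_eq_zero fun _ hS h => hn (hS.1 h.1 h.2 hst)

lemma KMax.cnt_eq {G : SimpleGraph V} {q r : ℕ} (h : KMax G q r) {s t : V}
    (hn : ¬ G.Adj s t) : cnt G q (fun S => s ∈ S) = cnt G q (fun S => t ∈ S) := by
  by_cases hst : s = t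
  · rw [hst]
  have h1 := h.le_of_replace hst
  have h2 := h.le_of_replace (Ne.symm hst)
  rw [cnt_nonadj hst hn] at h1
  rw [cnt_nonadj (Ne.symm hst) (fun h => hn h.symm)] at h2
  omega

/-- Every edge lies in a `q`-clique. -/
def Covered (G : SimpleGraph V) (q : ℕ) : Prop :=
  ∀ a b, G.Adj a b → 0 < cnt G q (fun S => a ∈ S ∧ b ∈ S)

lemma KMax.trans {G : SimpleGraph V} {q r : ℕ} (h : KMax G q r) (hc : Covered G q) {t s u : V}
    (hts : ¬ G.Adj t s) (hsu : ¬ G.Adj s u) : ¬ G.Adj t u := by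
  classical
  intro htu
  have hst : ¬ G.Adj s t := fun h => hts h.symm
  have nst : s ≠ t := fun h => hsu (h ▸ htu)
  have nsu : s ≠ u := fun h => hst (h ▸ htu.symm)
  have ntu : t ≠ u := htu.ne
  have e1 := h.cnt_eq hst
  have e2 := h.cnt_eq hsu
  have r1 := cnt_replace G q nst
  have hsu' : ¬ (G.replaceVertex s t).Adj s u := by
    rwa [G.adj_replaceVertex_iff_of_ne s nst ntu.symm]
  have hut' : ¬ (G.replaceVertex s t).Adj u t := by
    rw [adj_comm]
    simp only [replaceVertex]
    simp [ntu.symm, hsu]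
  have r2 := cnt_replace (G.replaceVertex s t) q nsu
  have z1 := cnt_nonadj (q := q) nst hst
  have z2 := cnt_nonadj (q := q) nsu hsu'
  have z3 := cnt_nonadj (q := q) ntu.symm hut'
  have z4 := cnt_nonadj (q := q) nst (G.not_adj_replaceVertex_same s t)
  have m := h.2 _ ((h.1.replaceVertex s t).replaceVertex s u)
  have s1 := cnt_split (G.replaceVertex s t) q (fun S => u ∈ S) (fun S => t ∈ S)
  have s2 := cnt_split (G.replaceVertex s t) q (fun S => s ∈ S) (fun S => t ∈ S)
  have s3 := cnt_split G q (fun S => u ∈ S) (fun S => t ∈ S)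
  have s4 := cnt_split G q (fun S => s ∈ S) (fun S => t ∈ S)
  have n1 := cnt_replace_notMem G q s t (fun S => u ∈ S)
  have n2 := cnt_replace_notMem G q s t (fun S => s ∈ S)
  have p := hc u t htu.symm
  omega

/-- Counting cliques through `v` by their intersection with an independent set `A`. -/
lemma cnt_indep {G : SimpleGraph V} {q : ℕ} (v : V) (A : Finset V)
    (hA : ∀ a ∈ A, ∀ b ∈ A, ¬ G.Adj a b) (c : ℕ)
    (hc : ∀ x ∈ A, cnt G q (fun S => v ∈ S ∧ x ∈ S) = c) :
    cnt G q (fun S => v ∈ S) = A.card * c + cnt G q (fun S => v ∈ S ∧ ∀ x ∈ A, x ∉ S) := by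
  classical
  have h1 : A.card * c = cnt G q (fun S => v ∈ S ∧ ∃ x ∈ A, x ∈ S) := by
    rw [← smul_eq_mul, ← Finset.sum_const, ← Finset.sum_congr rfl hc]
    unfold cnt
    rw [← Finset.card_biUnion]
    · congr 1
      ext S
      simp only [Finset.mem_biUnion, Finset.mem_filter, Finset.mem_univ, true_and]
      tauto
    · intro x hx y hy hxy
      rw [Function.onFun, Finset.disjoint_left]
      intro S hS hS'
      simp only [Finset.mem_filter, Finset.mem_univ, true_and] at hS hS'
      exact hA x hx y hy (hS.1.1 hS.2.2 hS'.2.2 hxy)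
  rw [h1, cnt_split G q _ (fun S => ∃ x ∈ A, x ∈ S)]
  simp

end cntlemmas

section core
variable {V : Type*} [Fintype V]

lemma cnt_twin_le {G : SimpleGraph V} {q : ℕ} {v x y : V}
    (hE : Equivalence (¬G.Adj · ·)) (hxy : ¬ G.Adj x y) (hv : G.Adj v x) :
    cnt G q (fun S => v ∈ S ∧ x ∈ S) ≤ cnt G q (fun S => v ∈ S ∧ y ∈ S) := by
  classical
  by_cases hne : x = y
  · rw [hne]
  have hvy : G.Adj v y := by
    by_contra h
    exact hE.trans h (hE.symm hxy) hv
  have key : ∀ z, G.Adj x z ↔ G.Adj y z := fun z => by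
    constructor
    · intro h; by_contra h'; exact hE.trans hxy h' h
    · intro h; by_contra h'; exact hE.trans (hE.symm hxy) h' h
  apply cnt_le_map (Equiv.swap x y)
  rintro S hS ⟨hvS, hxS⟩
  have hyS : y ∉ S := fun h => hxy (hS.1 hxS h hne)
  refine ⟨?_, ?_, ?_⟩
  · intro a ha b hb hab
    simp only [Finset.coe_map, Set.mem_image, Finset.mem_coe, Equiv.coe_toEmbedding] at ha hb
    obtain ⟨a, hx, rfl⟩ := ha
    obtain ⟨b, hy, rfl⟩ := hb
    have hxy : a ≠ b := fun h => hab (by rw [h])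
    have := hS.1 hx hy hxy
    have hxt : a ≠ y := fun h => hyS (h ▸ hx)
    have hyt : b ≠ y := fun h => hyS (h ▸ hy)
    simp only [Equiv.swap_apply_def, hxt, hyt, if_false]
    split_ifs with h1 h2 h2
    · exact absurd (h1.trans h2.symm) hxy
    · subst h1; exact (key _).1 this
    · subst h2; exact ((key _).1 this.symm).symm
    · exact this
  · simp only [Finset.mem_map, Equiv.coe_toEmbedding]
    exact ⟨v, hvS, Equiv.swap_apply_of_ne_of_ne hv.ne hvy.ne⟩
  · simp only [Finset.mem_map, Equiv.coe_toEmbedding]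
    exact ⟨x, hxS, by simp⟩

lemma cnt_twin {G : SimpleGraph V} {q : ℕ} {v x y : V}
    (hE : Equivalence (¬G.Adj · ·)) (hxy : ¬ G.Adj x y) (hv : G.Adj v x) :
    cnt G q (fun S => v ∈ S ∧ x ∈ S) = cnt G q (fun S => v ∈ S ∧ y ∈ S) := by
  apply le_antisymm (cnt_twin_le hE hxy hv)
  apply cnt_twin_le hE (hE.symm hxy)
  by_contra h
  exact hE.trans h (hE.symm hxy) hv

/-- Cliques through `w` avoiding the class of `v` transfer to cliques through `v`
avoiding the class of `w`. -/
lemma cnt_swap_le {G : SimpleGraph V} {q : ℕ} {v w : V}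
    (hE : Equivalence (¬G.Adj · ·)) (hvw : G.Adj v w) (A B : Finset V)
    (hA : ∀ x, x ∈ A ↔ ¬ G.Adj w x) (hB : ∀ x, x ∈ B ↔ ¬ G.Adj v x) :
    cnt G q (fun S => w ∈ S ∧ ∀ x ∈ B, x ∉ S) ≤ cnt G q (fun S => v ∈ S ∧ ∀ x ∈ A, x ∉ S) := by
  classical
  apply cnt_le_map (Equiv.swap w v)
  rintro S hS ⟨hwS, hBS⟩
  have hvS : v ∉ S := hBS v ((hB v).2 (by simp))
  have hadj : ∀ x ∈ S, G.Adj v x := fun x hx => by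
    by_contra h; exact hBS x ((hB x).2 h) hx
  refine ⟨?_, ?_, ?_⟩
  · intro a ha b hb hab
    simp only [Finset.coe_map, Set.mem_image, Finset.mem_coe, Equiv.coe_toEmbedding] at ha hb
    obtain ⟨a, hx, rfl⟩ := ha
    obtain ⟨b, hy, rfl⟩ := hb
    have hxy : a ≠ b := fun h => hab (by rw [h])
    have := hS.1 hx hy hxy
    have hxt : a ≠ v := fun h => hvS (h ▸ hx)
    have hyt : b ≠ v := fun h => hvS (h ▸ hy)
    simp only [Equiv.swap_apply_def, hxt, hyt, if_false]
    split_ifs with h1 h2 h2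
    · exact absurd (h1.trans h2.symm) hxy
    · exact hadj _ hy
    · exact (hadj _ hx).symm
    · exact this
  · simp only [Finset.mem_map, Equiv.coe_toEmbedding]
    exact ⟨w, hwS, by simp⟩
  · intro x hx
    simp only [Finset.mem_map, Equiv.coe_toEmbedding, not_exists, not_and]
    rintro y hy rfl
    rw [hA] at hx
    have hyv : y ≠ v := fun h => hvS (h ▸ hy)
    by_cases hyw : y = w
    · subst hyw
      simp at hx
      exact hx hvw.symm
    · rw [Equiv.swap_apply_of_ne_of_ne hyw hyv] at hx
      exact hx (hS.1 hwS hy (Ne.symm hyw))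

lemma KMax.balanced {G : SimpleGraph V} {q r : ℕ} (h : KMax G q r) (hc : Covered G q)
    (hE : Equivalence (¬G.Adj · ·)) {v w : V} (hvw : G.Adj v w) (A B : Finset V)
    (hA : ∀ x, x ∈ A ↔ ¬ G.Adj w x) (hB : ∀ x, x ∈ B ↔ ¬ G.Adj v x) :
    A.card ≤ B.card + 1 := by
  have h1 := cnt_indep (q := q) v A
    (fun a ha b hb => hE.trans (hE.symm ((hA a).1 ha)) ((hA b).1 hb))
    (cnt G q (fun S => v ∈ S ∧ w ∈ S))
    (fun x hx => (cnt_twin hE ((hA x).1 hx) hvw).symm)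
  have h2 := cnt_indep (q := q) w B
    (fun a ha b hb => hE.trans (hE.symm ((hB a).1 ha)) ((hB b).1 hb))
    (cnt G q (fun S => w ∈ S ∧ v ∈ S))
    (fun x hx => (cnt_twin hE ((hB x).1 hx) hvw.symm).symm)
  have h3 : cnt G q (fun S => w ∈ S ∧ v ∈ S) = cnt G q (fun S => v ∈ S ∧ w ∈ S) := by
    simp only [and_comm]
  rw [h3] at h2
  have h4 := cnt_swap_le (q := q) hE hvw A B hA hB
  have h5 := h.le_of_replace hvw.ne
  have h6 := hc v w hvw
  by_contra! hlt
  have h7 : (B.card + 2) * cnt G q (fun S => v ∈ S ∧ w ∈ S)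
    ≤ A.card * cnt G q (fun S => v ∈ S ∧ w ∈ S) := Nat.mul_le_mul_right _ hlt
  rw [add_mul] at h7
  omega

lemma KMax.exists_clique {G : SimpleGraph V} {q r : ℕ} (h : KMax G q r) (hr : 0 < r)
    (hqr : q ≤ r) (hrn : r ≤ Fintype.card V) : ∃ S, G.IsNClique q S := by
  obtain ⟨H, _, hH⟩ := exists_isTuranMaximal (V := V) hr
  have h1 := not_cliqueFree_of_isTuranMaximal hrn hH
  have h2 : ¬ H.CliqueFree q := fun h => h1 (h.mono hqr)
  simp only [CliqueFree, not_forall, not_not] at h2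
  obtain ⟨S, hS⟩ := h2
  have h3 : 0 < cnt H q (fun _ => True) := cnt_pos.2 ⟨S, hS, trivial⟩
  obtain ⟨S, hS, -⟩ := cnt_pos.1 (h3.trans_le (h.2 H hH.1))
  exact ⟨S, hS⟩

lemma KMax.not_cliqueFree {G : SimpleGraph V} {q r : ℕ} (h : KMax G q r)
    (h2 : 2 ≤ q) (hqr : q ≤ r) (hrn : r ≤ Fintype.card V)
    (hE : Equivalence (¬G.Adj · ·)) {x y : V} (hxy : x ≠ y) (hn : ¬ G.Adj x y) :
    ¬ G.CliqueFree r := by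
  classical
  intro cf
  obtain ⟨S, hS⟩ := h.exists_clique (by omega) hqr hrn
  have m := h.2 _ (cf.sup_edge x y)
  have s := cnt_split (G ⊔ edge x y) q (fun _ => True) (fun S => x ∈ S ∧ y ∈ S)
  have hle : cnt G q (fun _ => True) ≤
      cnt (G ⊔ edge x y) q (fun S => True ∧ ¬ (x ∈ S ∧ y ∈ S)) := by
    apply cnt_mono
    rintro T ⟨hT, -⟩
    exact ⟨hT.mono le_sup_left, trivial, fun hh => hn (hT.1 hh.1 hh.2 hxy)⟩
  have hp : 0 < cnt (G ⊔ edge x y) q (fun S => True ∧ (x ∈ S ∧ y ∈ S)) := by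
    rw [cnt_pos]
    have c1 : (S.filter (fun z => ¬ G.Adj x z)).card ≤ 1 := by
      rw [Finset.card_le_one]
      intro a ha b hb
      simp only [Finset.mem_filter] at ha hb
      by_contra hab
      exact hE.trans (hE.symm ha.2) hb.2 (hS.1 ha.1 hb.1 hab)
    have c2 := Finset.card_filter_add_card_filter_not (s := S) (fun z => G.Adj x z)
    rw [hS.2] at c2
    obtain ⟨T, hTS, hT⟩ := Finset.exists_subset_card_eq
      (show q - 2 ≤ (S.filter (fun z => G.Adj x z)).card by omega)
    have hx : ∀ z ∈ T, G.Adj x z := fun z hz => (Finset.mem_filter.1 (hTS hz)).2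
    have hy : ∀ z ∈ T, G.Adj y z := fun z hz => by
      by_contra h'; exact hE.trans hn h' (hx z hz)
    have hTc : G.IsNClique (q - 2) T :=
      ⟨fun a ha b hb => hS.1 (Finset.mem_filter.1 (hTS ha)).1 (Finset.mem_filter.1 (hTS hb)).1, hT⟩
    have hT1 := (hTc.mono (le_sup_left : G ≤ G ⊔ edge x y)).insert (a := y)
      (fun b hb => Or.inl (hy b hb))
    have hT2 := hT1.insert (a := x) (by
      intro b hb
      rcases Finset.mem_insert.1 hb with rfl | hb
      · right; simp [edge_adj, hxy]
      · left; exact hx b hb)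
    refine ⟨insert x (insert y T), ?_, trivial, by simp, by simp⟩
    convert hT2 using 1
    omega
  omega

lemma KMax.iso {G : SimpleGraph V} {q r : ℕ} (h : KMax G q r) (hc : Covered G q)
    (h2 : 2 ≤ q) (hqr : q ≤ r) (hrn : r < Fintype.card V) :
    Nonempty (G ≃g turanGraph (Fintype.card V) r) := by
  classical
  have hE : Equivalence (¬G.Adj · ·) :=
    ⟨by simp, by simp [adj_comm], fun h1 h2 => h.trans hc h1 h2⟩
  let st : Setoid V := ⟨_, hE⟩
  let fp : Finpartition (Finset.univ : Finset V) := Finpartition.ofSetoid st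
  have hmem : ∀ s t, t ∈ fp.part s ↔ ¬ G.Adj s t := fun s t =>
    Finpartition.mem_part_ofSetoid_iff_rel
  have hpart : ∀ s t, ¬ G.Adj s t ↔ fp.part s = fp.part t := fun s t => by
    rw [← hmem, fp.mem_part_iff_part_eq_part (Finset.mem_univ t) (Finset.mem_univ s), eq_comm]
  have heq : fp.IsEquipartition := by
    by_contra hn
    rw [Finpartition.not_isEquipartition] at hn
    obtain ⟨large, hl, small, hs, ineq⟩ := hn
    obtain ⟨w, hw⟩ := fp.nonempty_of_mem_parts hl
    obtain ⟨v, hv⟩ := fp.nonempty_of_mem_parts hs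
    have large_eq := fp.part_eq_of_mem hl hw
    have small_eq := fp.part_eq_of_mem hs hv
    have ha : G.Adj v w := by
      by_contra hn
      rw [hpart, small_eq, large_eq] at hn
      rw [hn] at ineq
      omega
    have := h.balanced hc hE ha large small (fun x => by rw [← large_eq, hmem])
      (fun x => by rw [← small_eq, hmem])
    omega
  have hle : fp.parts.card ≤ r := by
    by_contra! l
    obtain ⟨z, -, hz⟩ := fp.exists_subset_part_bijOn
    have ncf : ¬G.CliqueFree z.card := by
      refine IsNClique.not_cliqueFree ⟨fun v hv w hw hn ↦ ?_, rfl⟩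
      contrapose hn
      exact hz.injOn hv hw (by rwa [← hpart])
    rw [Finset.card_eq_of_equiv hz.equiv] at ncf
    exact absurd (h.1.mono (Nat.succ_le_of_lt l)) ncf
  have hcard : fp.parts.card = r := by
    apply le_antisymm hle
    by_contra! l
    obtain ⟨x, -, y, -, hn, he⟩ :=
      Finset.exists_ne_map_eq_of_card_lt_of_maps_to (s := (Finset.univ : Finset V))
        (t := fp.parts) (by rw [Finset.card_univ]; omega)
        (fun a _ ↦ fp.part_mem.2 (Finset.mem_univ a))
    apply h.not_cliqueFree h2 hqr hrn.le hE hn ((hpart x y).2 he)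
    intro z hz
    obtain ⟨a, ha, b, hb, hab, he⟩ :=
      Finset.exists_ne_map_eq_of_card_lt_of_maps_to (s := z)
        (t := fp.parts) (by rw [hz.2]; omega)
        (fun a _ ↦ fp.part_mem.2 (Finset.mem_univ a))
    exact (hpart a b).2 he (hz.1 ha hb hab)
  obtain ⟨zm, zp⟩ := heq.exists_partPreservingEquiv
  let e₀ : V ≃ {x // x ∈ (Finset.univ : Finset V)} :=
    (Equiv.subtypeUnivEquiv Finset.mem_univ).symm
  let e : V ≃ Fin (Fintype.card V) := (e₀.trans zm).trans (finCongr Finset.card_univ)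
  have he : ∀ a, (e a : ℕ) = zm ⟨a, Finset.mem_univ a⟩ := fun _ => rfl
  refine ⟨⟨e, ?_⟩⟩
  intro a b
  rw [turanGraph_adj, he, he]
  have := zp ⟨a, Finset.mem_univ a⟩ ⟨b, Finset.mem_univ b⟩
  rw [← hpart, hcard] at this
  rw [← not_iff_not, not_ne_iff]
  exact this.symm

/-- Delete the edges lying in no `q`-clique. -/
def prune (G : SimpleGraph V) (q : ℕ) : SimpleGraph V where
  Adj a b := G.Adj a b ∧ ∃ S, G.IsNClique q S ∧ a ∈ S ∧ b ∈ S
  symm := ⟨fun _ _ ⟨h, S, h1, h2, h3⟩ => ⟨h.symm, S, h1, h3, h2⟩⟩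
  loopless := ⟨fun _ h => G.loopless.irrefl _ h.1⟩

lemma prune_le (G : SimpleGraph V) (q : ℕ) : prune G q ≤ G := fun _ _ h => h.1

lemma prune_clique (G : SimpleGraph V) (q : ℕ) (S : Finset V) :
    (prune G q).IsNClique q S ↔ G.IsNClique q S :=
  ⟨fun h => h.mono (prune_le G q),
    fun h => ⟨fun _ ha _ hb hab => ⟨h.1 ha hb hab, S, h, ha, hb⟩, h.2⟩⟩

lemma KMax.iso' {G : SimpleGraph V} {q r : ℕ} (h : KMax G q r)
    (h2 : 2 ≤ q) (hqr : q ≤ r) (hrn : r < Fintype.card V) :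
    Nonempty (G ≃g turanGraph (Fintype.card V) r) := by
  classical
  have e : cnt (prune G q) q (fun _ => True) = cnt G q (fun _ => True) :=
    cnt_congr fun S => by rw [prune_clique]
  have hm : KMax (prune G q) q r := ⟨h.1.anti (prune_le G q), fun H hH => by
    rw [e]; exact h.2 H hH⟩
  have hc : Covered (prune G q) q := by
    rintro a b ⟨-, S, h1, h2, h3⟩
    exact cnt_pos.2 ⟨S, (prune_clique G q S).2 h1, h2, h3⟩
  obtain ⟨f⟩ := hm.iso hc h2 hqr hrn
  have ht : (prune G q).IsTuranMaximal r := isTuranMaximal_of_iso f (by omega)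
  have : prune G q = G := (IsExtremal.le_iff_eq ht h.1).1 (prune_le G q)
  rw [← this]
  exact ⟨f⟩

lemma exists_kmax (q r : ℕ) (hr : 0 < r) : ∃ G : SimpleGraph V, KMax G q r := by
  classical
  obtain ⟨G, hG, hmax⟩ := Finset.exists_max_image
    (Finset.univ.filter fun G : SimpleGraph V => G.CliqueFree (r + 1))
    (fun G => cnt G q (fun _ => True)) ⟨⊥, by simpa using cliqueFree_bot (by omega)⟩
  exact ⟨G, by simpa using hG, fun H hH => hmax H (by simpa using hH)⟩

lemma numCliques_eq_cnt (G : SimpleGraph V) (q : ℕ) :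
    numCliques G q = cnt G q (fun _ => True) := by
  classical
  unfold numCliques cnt
  rw [← Set.ncard_coe_finset]
  simp

lemma numCliques_le_iso {W X : Type*} [Fintype X] {G : SimpleGraph W} {H : SimpleGraph X}
    (f : G ≃g H) (q : ℕ) : numCliques G q ≤ numCliques H q := by
  unfold numCliques
  apply Set.ncard_le_ncard_of_injOn (fun S => S.map f.toEquiv.toEmbedding)
  · intro S hS
    refine ⟨?_, by rw [Finset.card_map]; exact hS.2⟩
    intro a ha b hb hab
    simp only [Finset.coe_map, Set.mem_image, Finset.mem_coe] at ha hb
    obtain ⟨a, hx, rfl⟩ := ha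
    obtain ⟨b, hy, rfl⟩ := hb
    exact f.map_rel_iff.2 (hS.1 hx hy fun h => hab (by rw [h]))
  · intro S _ T _ hST
    exact Finset.map_injective _ hST

end core

theorem stmt3 (n q p : ℕ) (h2 : 2 ≤ q) (hqp : q < p) (hpn : p ≤ n)
    {V : Type*} [Fintype V] (G : SimpleGraph V) (hn : Fintype.card V = n)
    (hfree : G.CliqueFree p)
    (heq : numCliques G q = numCliques (turanGraph n (p - 1)) q) :
    Nonempty (G ≃g turanGraph n (p - 1)) := by
  subst hn
  obtain ⟨M, hM⟩ := exists_kmax (V := V) q (p - 1) (by omega)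
  obtain ⟨f⟩ := hM.iso' h2 (by omega) (by omega)
  have e := numCliques_le_iso f q
  rw [← heq, numCliques_eq_cnt, numCliques_eq_cnt] at e
  have hG : KMax G q (p - 1) :=
    ⟨by rwa [Nat.sub_add_cancel (by omega)], fun H hH => (hM.2 H hH).trans e⟩
  exact hG.iso' h2 (by omega) (by omega)
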